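/- Let F be a Ferrers diagram of semiperimeter n+1 and T ∈ EWtab(F). Then for every j ∈ {1,…,n}, ν_j(T) = μ_j(φ_TC(T)). -/

import Mathlib

open Classical

/-- A Ferrers diagram of semiperimeter `n + 1`, encoded by the set of its row labels
(labels `0, …, n` run along the south-east border; `0` labels the top row and the
last label `n` is a column label). -/
structure Ferrers (n : ℕ) where
  rows : Finset (Fin (n + 1))
  zero_mem : 0 ∈ rows
  last_not_mem : Fin.last n ∉ rows

namespace Ferrers

/-- `(i, j)` is a cell of the diagram: `i` is a row label, `j` a column label, `i < j`. -/
def Cell {n : ℕ} (F : Ferrers n) (i j : Fin (n + 1)) : Prop :=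
  i ∈ F.rows ∧ j ∉ F.rows ∧ i < j

/-- Adjacency in the Ferrers graph `G(F)`. -/
def Adj {n : ℕ} (F : Ferrers n) (u v : Fin (n + 1)) : Prop :=
  F.Cell u v ∨ F.Cell v u

/-- Degree of a vertex in `G(F)`. -/
noncomputable def deg {n : ℕ} (F : Ferrers n) (v : Fin (n + 1)) : ℕ :=
  {u | F.Adj v u}.ncard

/-- Toppling a single vertex.  The height at the sink `0` is kept equal to `c 0`
(grains sent to the sink vanish); toppling the sink sends one grain to each of
its neighbours. -/
noncomputable def topple {n : ℕ} (F : Ferrers n) (c : Fin (n + 1) → ℕ)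
    (v : Fin (n + 1)) : Fin (n + 1) → ℕ :=
  fun u =>
    if u = 0 then c 0
    else if u = v then c v - F.deg v
    else if F.Adj v u then c u + 1
    else c u

/-- Toppling the vertices of a list in order. -/
noncomputable def toppleList {n : ℕ} (F : Ferrers n) (c : Fin (n + 1) → ℕ)
    (l : List (Fin (n + 1))) : Fin (n + 1) → ℕ :=
  l.foldl F.topple c

/-- Simultaneous toppling of a set of vertices. -/
noncomputable def toppleSet {n : ℕ} (F : Ferrers n) (c : Fin (n + 1) → ℕ)
    (S : Set (Fin (n + 1))) : Fin (n + 1) → ℕ :=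
  fun u =>
    if u = 0 then c 0
    else c u + {w ∈ S | F.Adj w u}.ncard - if u ∈ S then F.deg u else 0

/-- A configuration is stable if every non-sink vertex has fewer grains than its degree. -/
def Stable {n : ℕ} (F : Ferrers n) (c : Fin (n + 1) → ℕ) : Prop :=
  ∀ v, v ≠ 0 → c v < F.deg v

/-- A Dhar (burning) ordering for `c`: an ordering `v₀ = 0, v₁, …, vₙ` of all the
vertices such that each `vᵢ` (`i ≥ 1`) is unstable after toppling `v₀, …, v_{i-1}`. -/
def DharSeq {n : ℕ} (F : Ferrers n) (c : Fin (n + 1) → ℕ) (l : List (Fin (n + 1))) : Prop :=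
  l.length = n + 1 ∧ l.Nodup ∧ l.head? = some 0 ∧
    ∀ i, ∀ h : i < l.length, 1 ≤ i →
      F.deg (l.get ⟨i, h⟩) ≤ F.toppleList c (l.take i) (l.get ⟨i, h⟩)

/-- Recurrent configurations (via Dhar's criterion).  The height at the sink is
normalised to `0`. -/
def Recurrent {n : ℕ} (F : Ferrers n) (c : Fin (n + 1) → ℕ) : Prop :=
  c 0 = 0 ∧ F.Stable c ∧ ∃ l, F.DharSeq c l

/-- Minimal recurrent configurations: recurrent with minimal total number of grains. -/
def RecMin {n : ℕ} (F : Ferrers n) (c : Fin (n + 1) → ℕ) : Prop :=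
  F.Recurrent c ∧ ∀ c', F.Recurrent c' → (∑ v, c v) ≤ ∑ v, c' v

/-- Canonical toppling: block `0` is `{0}` (the sink); from then on, blocks with odd
index are the sets of currently unstable column vertices and blocks with even index
the sets of currently unstable row vertices.  The first component is the configuration
just before toppling the block recorded in the second component. -/
noncomputable def canonAux {n : ℕ} (F : Ferrers n) (c : Fin (n + 1) → ℕ) :
    ℕ → ((Fin (n + 1) → ℕ) × Set (Fin (n + 1)))
  | 0 => (c, {0})
  | k + 1 =>
    let c' := F.toppleSet (canonAux F c k).1 (canonAux F c k).2
    (c', {v | v ≠ 0 ∧ (if k % 2 = 0 then v ∉ F.rows else v ∈ F.rows) ∧ F.deg v ≤ c' v})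

/-- The `k`-th block of the canonical toppling of `c`:
`canonTop F c 0 = U⁰ = {0}`, `canonTop F c (2i-1) = Vⁱ`, `canonTop F c (2i) = Uⁱ`. -/
noncomputable def canonTop {n : ℕ} (F : Ferrers n) (c : Fin (n + 1) → ℕ) (k : ℕ) :
    Set (Fin (n + 1)) :=
  (F.canonAux c k).2

/-- The configuration just before toppling the `k`-th block of the canonical toppling. -/
noncomputable def canonConfig {n : ℕ} (F : Ferrers n) (c : Fin (n + 1) → ℕ) (k : ℕ) :
    Fin (n + 1) → ℕ :=
  (F.canonAux c k).1

/-- The index of the block of the canonical toppling of `c` containing `v`. -/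
noncomputable def bIdx {n : ℕ} (F : Ferrers n) (c : Fin (n + 1) → ℕ) (v : Fin (n + 1)) : ℕ :=
  sInf {k | v ∈ F.canonTop c k}

/-- `T` is a EW-tableau on `F` (entries of non-cells are normalised to `false`):
the top row contains only `1`s, every other row contains a `0`, and there is no
rectangle with two diagonally opposite `0`s and two `1`s in the other corners. -/
def IsEW {n : ℕ} (F : Ferrers n) (T : Fin (n + 1) → Fin (n + 1) → Bool) : Prop :=
  (∀ i j, ¬F.Cell i j → T i j = false) ∧
  (∀ j, F.Cell 0 j → T 0 j = true) ∧
  (∀ i, i ∈ F.rows → i ≠ 0 → ∃ j, F.Cell i j ∧ T i j = false) ∧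
  (∀ i i' j j', F.Cell i j → F.Cell i j' → F.Cell i' j → F.Cell i' j' →
    T i j = T i' j' → T i j' = T i' j → T i j = T i j')

/-- The configuration associated to a tableau: row vertices count the `1`s in their
row, column vertices count the `0`s in their column (the sink is normalised to `0`). -/
noncomputable def phiTC {n : ℕ} (F : Ferrers n) (T : Fin (n + 1) → Fin (n + 1) → Bool) :
    Fin (n + 1) → ℕ :=
  fun v =>
    if v = 0 then 0
    else if v ∈ F.rows then {j | F.Cell v j ∧ T v j = true}.ncard
    else {i | F.Cell i v ∧ T i v = false}.ncard

/-- The tableau associated to a (minimal recurrent) configuration: a cell `(i, j)`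
gets a `1` exactly when `i` lies in an earlier block than `j` in the canonical
toppling of `c`. -/
noncomputable def phiCT {n : ℕ} (F : Ferrers n) (c : Fin (n + 1) → ℕ) :
    Fin (n + 1) → Fin (n + 1) → Bool :=
  fun i j => if F.Cell i j ∧ F.bIdx c i < F.bIdx c j then true else false

/-- The supplementary tableau of `T`: `S i j = 1` exactly when the row vertex `i`
lies in an earlier block than the column vertex `j` in `CanonTop (φ_TC T)`. -/
noncomputable def suppS {n : ℕ} (F : Ferrers n) (T : Fin (n + 1) → Fin (n + 1) → Bool)
    (i j : Fin (n + 1)) : Bool :=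
  if F.bIdx (F.phiTC T) i < F.bIdx (F.phiTC T) j then true else false

/-- The entry of `T` in cell `(j, k)` is a cornersupport entry. -/
def Cornersupport {n : ℕ} (F : Ferrers n) (T : Fin (n + 1) → Fin (n + 1) → Bool)
    (j k : Fin (n + 1)) : Prop :=
  ∃ j' k', j' ∈ F.rows ∧ k' ∉ F.rows ∧ j' ≠ j ∧ k' ≠ k ∧
    F.suppS T j' k' = !(T j k) ∧ F.suppS T j' k = T j k ∧ F.suppS T j k' = T j k

/-- `ν_v(T)`: the number of non-cornersupport `0`s in row `v` (if `v` is a row label),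
resp. non-cornersupport `1`s in column `v` (if `v` is a column label). -/
noncomputable def nu {n : ℕ} (F : Ferrers n) (T : Fin (n + 1) → Fin (n + 1) → Bool)
    (v : Fin (n + 1)) : ℕ :=
  if v ∈ F.rows then {k | F.Cell v k ∧ T v k = false ∧ ¬F.Cornersupport T v k}.ncard
  else {i | F.Cell i v ∧ T i v = true ∧ ¬F.Cornersupport T i v}.ncard

/-- `μ_v(c)`: if `v ∈ Uⁱ`, the number of `k ∈ Vⁱ` with `k > v`; if `v ∈ Vⁱ`,
the number of `k ∈ U^{i-1}` with `k < v`.  In both cases the relevant block is the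
one immediately preceding the block of `v`. -/
noncomputable def mu {n : ℕ} (F : Ferrers n) (c : Fin (n + 1) → ℕ) (v : Fin (n + 1)) : ℕ :=
  if v ∈ F.rows then {k | v < k ∧ k ∈ F.canonTop c (F.bIdx c v - 1)}.ncard
  else {k | k < v ∧ k ∈ F.canonTop c (F.bIdx c v - 1)}.ncard

/-- The minimal recurrent configuration with the same canonical toppling as `c`:
if `j ∈ Uⁱ` then `minrec c j = |{ℓ ∈ Vᵏ : j < ℓ, k > i}|`, and if `j ∈ Vⁱ` then
`minrec c j = |{ℓ ∈ Uᵏ : ℓ < j, k ≥ i}|` (blocks `Vᵏ` sit at odd index `2k - 1`,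
blocks `Uᵏ` at even index `2k`). -/
noncomputable def minrecFun {n : ℕ} (F : Ferrers n) (c : Fin (n + 1) → ℕ) :
    Fin (n + 1) → ℕ :=
  fun j =>
    if j = 0 then 0
    else if j ∈ F.rows then
      {l | j < l ∧ ∃ k, F.bIdx c j < 2 * k + 1 ∧ l ∈ F.canonTop c (2 * k + 1)}.ncard
    else
      {l | l < j ∧ ∃ k, F.bIdx c j < 2 * k ∧ l ∈ F.canonTop c (2 * k)}.ncard

/-- The number of edges of `G(F)` (equivalently, the number of cells of `F`). -/
noncomputable def edgeCount {n : ℕ} (F : Ferrers n) : ℕ :=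
  {p : Fin (n + 1) × Fin (n + 1) | F.Cell p.1 p.2}.ncard

/-- The orientation of `G(F)` given by a filling: an edge points from its row to its column
when the cell holds a `1`, and from its column to its row when the cell holds a `0`. -/
def Arc {n : ℕ} (F : Ferrers n) (T : Fin (n + 1) → Fin (n + 1) → Bool)
    (u v : Fin (n + 1)) : Prop :=
  (F.Cell u v ∧ T u v = true) ∨ (F.Cell v u ∧ T v u = false)

/-- The vertices toppled in one of the blocks `0, …, k` of the canonical toppling. -/
def toppledBy {n : ℕ} (F : Ferrers n) (c : Fin (n + 1) → ℕ) (k : ℕ) : Set (Fin (n + 1)) :=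
  {v | ∃ m ≤ k, v ∈ F.canonTop c m}

section

variable {n : ℕ} {F : Ferrers n} {T : Fin (n + 1) → Fin (n + 1) → Bool}

theorem Cell.not_symm {u v : Fin (n + 1)} (h : F.Cell u v) : ¬F.Cell v u :=
  fun h' => h'.2.1 h.1

theorem Arc.mem_rows_iff {u v : Fin (n + 1)} (h : F.Arc T u v) : u ∈ F.rows ↔ v ∉ F.rows := by
  rcases h with ⟨⟨h1, h2, -⟩, -⟩ | ⟨⟨h1, h2, -⟩, -⟩ <;> tauto

theorem Arc.not_symm {u v : Fin (n + 1)} (h : F.Arc T u v) : ¬F.Arc T v u := by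
  rintro (⟨h1, h2⟩ | ⟨h1, h2⟩) <;> rcases h with ⟨h3, h4⟩ | ⟨h3, h4⟩
  · exact h1.not_symm h3
  · simp_all
  · simp_all
  · exact h1.not_symm h3

theorem adj_iff_arc {u v : Fin (n + 1)} : F.Adj u v ↔ F.Arc T u v ∨ F.Arc T v u := by
  unfold Adj Arc
  cases T u v <;> cases T v u <;> simp <;> tauto

theorem adj_comm {u v : Fin (n + 1)} : F.Adj u v ↔ F.Adj v u := or_comm

theorem deg_eq_ncard_arc_add (v : Fin (n + 1)) :
    F.deg v = {u | F.Arc T v u}.ncard + {u | F.Arc T u v}.ncard := by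
  rw [← Set.ncard_union_eq]
  · unfold deg
    congr 1
    ext u
    exact adj_iff_arc
  · rw [Set.disjoint_left]
    exact fun u h h' => h.not_symm h'

theorem phiTC_eq_ncard_arc {v : Fin (n + 1)} (hv : v ≠ 0) :
    F.phiTC T v = {u | F.Arc T v u}.ncard := by
  unfold phiTC
  rw [if_neg hv]
  split_ifs with h
  · congr 1
    ext u
    simp only [Set.mem_ofPred_eq, Arc, Cell]
    tauto
  · congr 1
    ext u
    simp only [Set.mem_ofPred_eq, Arc, Cell]
    tauto

theorem not_arc_zero (hT : F.IsEW T) (u : Fin (n + 1)) : ¬F.Arc T u 0 := by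
  rintro (⟨h, -⟩ | ⟨h, h'⟩)
  · exact h.2.1 F.zero_mem
  · simp [hT.2.1 u h] at h'

theorem arc_zero_of_notMem_rows (hT : F.IsEW T) {v : Fin (n + 1)} (hv : v ∉ F.rows) :
    F.Arc T 0 v := by
  have h : F.Cell 0 v :=
    ⟨F.zero_mem, hv, Fin.pos_of_ne_zero fun h => hv (h ▸ F.zero_mem)⟩
  exact Or.inl ⟨h, hT.2.1 v h⟩

theorem exists_arc (hT : F.IsEW T) {v : Fin (n + 1)} (hv : v ≠ 0) : ∃ u, F.Arc T u v := by
  by_cases h : v ∈ F.rows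
  · obtain ⟨j, hj⟩ := hT.2.2.1 v h hv
    exact ⟨j, Or.inr hj⟩
  · exact ⟨0, arc_zero_of_notMem_rows hT h⟩

theorem phiTC_lt_deg (hT : F.IsEW T) {v : Fin (n + 1)} (hv : v ≠ 0) :
    F.phiTC T v < F.deg v := by
  rw [phiTC_eq_ncard_arc hv, deg_eq_ncard_arc_add (T := T)]
  have : 0 < {u | F.Arc T u v}.ncard := (Set.ncard_pos).2 (exists_arc hT hv)
  omega

/-- The orientation of an EW-tableau is acyclic: every nonempty set of vertices has a member
with no in-neighbour in the set. -/
theorem eq_empty_of_forall_exists_arc (hT : F.IsEW T) (X : Finset (Fin (n + 1)))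
    (hX : ∀ v ∈ X, ∃ u ∈ X, F.Arc T u v) : X = ∅ := by
  induction X using Finset.strongInduction with
  | H X ih =>
    by_contra hne
    have hrow : (X.filter (· ∈ F.rows)).Nonempty := by
      obtain ⟨v, hv⟩ := Finset.nonempty_iff_ne_empty.2 hne
      obtain ⟨u, hu, huv⟩ := hX v hv
      by_cases h : v ∈ F.rows
      · exact ⟨v, by simp [hv, h]⟩
      · exact ⟨u, by simp [hu, huv.mem_rows_iff.2 h]⟩
    obtain ⟨i, hi, hmax⟩ := Finset.exists_max_image _ id hrow
    simp only [Finset.mem_filter, id] at hi hmax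
    obtain ⟨k, hkX, hki⟩ := hX i hi.1
    obtain ⟨r, hrX, hrk⟩ := hX k hkX
    have hk : k ∉ F.rows := fun h => hki.mem_rows_iff.1 h hi.2
    have hr : r ∈ F.rows := hrk.mem_rows_iff.2 hk
    have hri : r ≠ i := fun h => hki.not_symm (h ▸ hrk)
    have herase : X.erase i = ∅ := by
      refine ih _ (Finset.erase_ssubset hi.1) fun v hv => ?_
      obtain ⟨u, hu, huv⟩ := hX v (Finset.mem_of_mem_erase hv)
      by_cases hui : u = i
      · subst hui
        have hv' : v ∉ F.rows := huv.mem_rows_iff.1 hi.2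
        refine ⟨r, Finset.mem_erase.2 ⟨hri, hrX⟩, ?_⟩
        rcases huv with ⟨c1, t1⟩ | ⟨c1, -⟩
        swap
        · exact absurd c1.1 hv'
        rcases hki with ⟨c2, -⟩ | ⟨c2, t2⟩
        · exact absurd c2.1 hk
        rcases hrk with ⟨c3, t3⟩ | ⟨c3, -⟩
        swap
        · exact absurd c3.1 hk
        have c4 : F.Cell r v := ⟨hr, hv', (hmax r ⟨hrX, hr⟩).trans_lt c1.2.2⟩
        refine Or.inl ⟨c4, ?_⟩
        by_contra t4
        have := hT.2.2.2 u r v k c1 c2 c4 c3 (by rw [t1, t3]) (by simp_all)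
        simp_all
      · exact ⟨u, Finset.mem_erase.2 ⟨hui, hu⟩, huv⟩
    have : r ∈ X.erase i := Finset.mem_erase.2 ⟨hri, hrX⟩
    simp [herase] at this

theorem toppledBy_zero (c : Fin (n + 1) → ℕ) : F.toppledBy c 0 = {0} := by
  ext v
  simp [toppledBy, canonTop, canonAux]

theorem toppledBy_succ (c : Fin (n + 1) → ℕ) (k : ℕ) :
    F.toppledBy c (k + 1) = F.toppledBy c k ∪ F.canonTop c (k + 1) := by
  ext v
  simp only [toppledBy, Set.mem_ofPred_eq, Set.mem_union]
  constructor
  · rintro ⟨m, hm, hv⟩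
    rcases Nat.le_succ_iff.1 hm with h | rfl
    · exact Or.inl ⟨m, h, hv⟩
    · exact Or.inr hv
  · rintro (⟨m, hm, hv⟩ | hv)
    · exact ⟨m, by omega, hv⟩
    · exact ⟨k + 1, le_rfl, hv⟩

theorem mem_canonTop_succ {c : Fin (n + 1) → ℕ} {k : ℕ} {v : Fin (n + 1)} :
    v ∈ F.canonTop c (k + 1) ↔
      v ≠ 0 ∧ (if k % 2 = 0 then v ∉ F.rows else v ∈ F.rows) ∧
        F.deg v ≤ F.canonConfig c (k + 1) v := Iff.rfl

theorem canonConfig_succ (c : Fin (n + 1) → ℕ) (k : ℕ) :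
    F.canonConfig c (k + 1) = F.toppleSet (F.canonConfig c k) (F.canonTop c k) := rfl

/-- After block `k`, every vertex has toppled at most once, so heights are determined by the set
of toppled vertices. -/
def TopplesOnce (F : Ferrers n) (c : Fin (n + 1) → ℕ) (k : ℕ) : Prop :=
  ∀ u, u ≠ 0 → F.canonConfig c (k + 1) u + (if u ∈ F.toppledBy c k then F.deg u else 0) =
    c u + {w ∈ F.toppledBy c k | F.Adj w u}.ncard

/-- The set of vertices toppled up to block `k` is closed under in-neighbours. -/
def ToppledClosed (F : Ferrers n) (T : Fin (n + 1) → Fin (n + 1) → Bool) (k : ℕ) : Prop :=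
  ∀ u v, F.Arc T u v → v ∈ F.toppledBy (F.phiTC T) k → u ∈ F.toppledBy (F.phiTC T) k

theorem mem_canonTop_succ_iff_of (hT : F.IsEW T) {k : ℕ} (h₁ : F.TopplesOnce (F.phiTC T) k)
    (h₂ : F.ToppledClosed T k) (v : Fin (n + 1)) :
    v ∈ F.canonTop (F.phiTC T) (k + 1) ↔
      (if k % 2 = 0 then v ∉ F.rows else v ∈ F.rows) ∧ v ∉ F.toppledBy (F.phiTC T) k ∧
        ∀ u, F.Arc T u v → u ∈ F.toppledBy (F.phiTC T) k := by
  rw [mem_canonTop_succ]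
  set W := F.toppledBy (F.phiTC T) k with hW
  by_cases hv0 : v = 0
  · have h0 : (0 : Fin (n + 1)) ∈ W := ⟨0, Nat.zero_le _, rfl⟩
    subst hv0
    simp [h0]
  have h := h₁ v hv0
  rw [← hW] at h
  have hlt := phiTC_lt_deg hT hv0
  by_cases hvW : v ∈ W
  · have hle : {w ∈ W | F.Adj w v}.ncard ≤ F.deg v :=
      Set.ncard_le_ncard fun w hw => adj_comm.1 hw.2
    rw [if_pos hvW] at h
    refine iff_of_false (fun h' => ?_) fun h' => h'.2.1 hvW
    have := h'.2.2
    omega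
  · rw [if_neg hvW, phiTC_eq_ncard_arc hv0] at h
    have hsub : {w ∈ W | F.Adj w v} ⊆ {w | F.Arc T w v} := fun w hw =>
      (adj_iff_arc.1 hw.2).resolve_right fun h' => hvW (h₂ v w h' hw.1)
    have hdeg := deg_eq_ncard_arc_add (F := F) (T := T) v
    have key : F.deg v ≤ F.canonConfig (F.phiTC T) (k + 1) v ↔
        ∀ u, F.Arc T u v → u ∈ W := by
      constructor
      · intro hle u hu
        have : {w ∈ W | F.Adj w v} = {w | F.Arc T w v} :=
          Set.eq_of_subset_of_ncard_le hsub (by omega)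
        have hu' : u ∈ {w ∈ W | F.Adj w v} := this ▸ hu
        exact hu'.1
      · intro hall
        have : {w | F.Arc T w v}.ncard ≤ {w ∈ W | F.Adj w v}.ncard :=
          Set.ncard_le_ncard fun w hw => ⟨hall w hw, adj_iff_arc.2 (Or.inl hw)⟩
        omega
    rw [key]
    simp [hv0, hvW]

theorem topplesOnce_and_toppledClosed (hT : F.IsEW T) (k : ℕ) :
    F.TopplesOnce (F.phiTC T) k ∧ F.ToppledClosed T k := by
  induction k with
  | zero =>
    constructor
    · intro u hu
      rw [toppledBy_zero, canonConfig_succ]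
      simp [toppleSet, hu, canonTop, canonConfig, canonAux]
    · intro u v huv hv
      rw [toppledBy_zero, Set.mem_singleton_iff] at hv
      exact absurd (hv ▸ huv) (not_arc_zero hT u)
  | succ k ih =>
    obtain ⟨h₁, h₂⟩ := ih
    have hmem := mem_canonTop_succ_iff_of hT h₁ h₂
    constructor
    · intro u hu
      have h := h₁ u hu
      rw [canonConfig_succ, toppledBy_succ]
      have hcard : {w ∈ F.toppledBy (F.phiTC T) k ∪ F.canonTop (F.phiTC T) (k + 1) |
          F.Adj w u}.ncard = {w ∈ F.toppledBy (F.phiTC T) k | F.Adj w u}.ncard +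
            {w ∈ F.canonTop (F.phiTC T) (k + 1) | F.Adj w u}.ncard := by
        rw [← Set.ncard_union_eq]
        · congr 1
          ext w
          simp only [Set.mem_ofPred_eq, Set.mem_union]
          tauto
        · rw [Set.disjoint_left]
          exact fun w hw hw' => ((hmem w).1 hw'.1).2.1 hw.1
      rw [hcard]
      simp only [toppleSet, if_neg hu, Set.mem_union]
      by_cases hb : u ∈ F.canonTop (F.phiTC T) (k + 1)
      · have hW := ((hmem u).1 hb).2.1
        have hdeg := (mem_canonTop_succ.1 hb).2.2
        simp only [hb, hW, if_true, if_false, or_true] at h ⊢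
        omega
      · simp only [hb, if_false, or_false]
        omega
    · intro u v huv hv
      rw [toppledBy_succ] at hv ⊢
      rcases hv with hv | hv
      · exact Or.inl (h₂ u v huv hv)
      · exact Or.inl (((hmem v).1 hv).2.2 u huv)

theorem mem_canonTop_succ_iff (hT : F.IsEW T) (k : ℕ) (v : Fin (n + 1)) :
    v ∈ F.canonTop (F.phiTC T) (k + 1) ↔
      (if k % 2 = 0 then v ∉ F.rows else v ∈ F.rows) ∧ v ∉ F.toppledBy (F.phiTC T) k ∧
        ∀ u, F.Arc T u v → u ∈ F.toppledBy (F.phiTC T) k :=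
  mem_canonTop_succ_iff_of hT (topplesOnce_and_toppledClosed hT k).1
    (topplesOnce_and_toppledClosed hT k).2 v

theorem exists_mem_canonTop (hT : F.IsEW T) (v : Fin (n + 1)) :
    ∃ k, v ∈ F.canonTop (F.phiTC T) k := by
  by_contra hv
  have hX := eq_empty_of_forall_exists_arc hT
    (Finset.univ.filter fun v => ¬∃ k, v ∈ F.canonTop (F.phiTC T) k) (fun w hw => by
      simp only [Finset.mem_filter, Finset.mem_univ, true_and] at hw ⊢
      by_contra! hall
      have hex : ∀ u, ∃ k, F.Arc T u w → u ∈ F.canonTop (F.phiTC T) k := by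
        intro u
        by_cases hu : F.Arc T u w
        · by_contra! hk
          exact hall u (fun k => (hk k).2) hu
        · exact ⟨0, fun h => absurd h hu⟩
      choose f hf using hex
      have hpred : ∀ k, (∑ u, f u) ≤ k → ∀ u, F.Arc T u w → u ∈ F.toppledBy (F.phiTC T) k :=
        fun k hk u hu =>
          ⟨f u, (Finset.single_le_sum (fun _ _ => Nat.zero_le _) (Finset.mem_univ u)).trans hk,
            hf u hu⟩
      have hnot : ∀ k, w ∉ F.toppledBy (F.phiTC T) k := fun k ⟨m, _, h⟩ => hw ⟨m, h⟩
      by_cases hr : w ∈ F.rows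
      · refine hw ⟨2 * (∑ u, f u) + 1 + 1, (mem_canonTop_succ_iff hT _ _).2
          ⟨?_, hnot _, hpred _ (by omega)⟩⟩
        rwa [if_neg (by omega)]
      · refine hw ⟨2 * (∑ u, f u) + 1, (mem_canonTop_succ_iff hT _ _).2
          ⟨?_, hnot _, hpred _ (by omega)⟩⟩
        rwa [if_pos (by omega)])
  have : v ∈ (∅ : Finset (Fin (n + 1))) := hX ▸ by simpa using hv
  simp at this

theorem mem_canonTop_bIdx (hT : F.IsEW T) (v : Fin (n + 1)) :
    v ∈ F.canonTop (F.phiTC T) (F.bIdx (F.phiTC T) v) :=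
  Nat.sInf_mem (s := {k | v ∈ F.canonTop (F.phiTC T) k}) (exists_mem_canonTop hT v)

theorem mem_canonTop_iff (hT : F.IsEW T) {k : ℕ} {v : Fin (n + 1)} :
    v ∈ F.canonTop (F.phiTC T) k ↔ F.bIdx (F.phiTC T) v = k := by
  refine ⟨fun h => ?_, fun h => h ▸ mem_canonTop_bIdx hT v⟩
  have hle : F.bIdx (F.phiTC T) v ≤ k := Nat.sInf_le h
  by_contra hne
  obtain ⟨m, rfl⟩ : ∃ m, k = m + 1 := ⟨k - 1, by omega⟩
  exact ((mem_canonTop_succ_iff hT m v).1 h).2.1 ⟨_, by omega, mem_canonTop_bIdx hT v⟩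

theorem mem_toppledBy_iff (hT : F.IsEW T) {k : ℕ} {v : Fin (n + 1)} :
    v ∈ F.toppledBy (F.phiTC T) k ↔ F.bIdx (F.phiTC T) v ≤ k := by
  simp [toppledBy, mem_canonTop_iff hT]

theorem bIdx_eq_succ_iff (hT : F.IsEW T) (k : ℕ) (v : Fin (n + 1)) :
    F.bIdx (F.phiTC T) v = k + 1 ↔
      (if k % 2 = 0 then v ∉ F.rows else v ∈ F.rows) ∧ k < F.bIdx (F.phiTC T) v ∧
        ∀ u, F.Arc T u v → F.bIdx (F.phiTC T) u ≤ k := by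
  rw [← mem_canonTop_iff hT, mem_canonTop_succ_iff hT]
  simp [mem_toppledBy_iff hT]

theorem bIdx_eq_zero_iff (hT : F.IsEW T) (v : Fin (n + 1)) :
    F.bIdx (F.phiTC T) v = 0 ↔ v = 0 :=
  (mem_canonTop_iff hT).symm

theorem mem_rows_iff_even_bIdx (hT : F.IsEW T) (v : Fin (n + 1)) :
    v ∈ F.rows ↔ F.bIdx (F.phiTC T) v % 2 = 0 := by
  rcases h : F.bIdx (F.phiTC T) v with _ | k
  · rw [bIdx_eq_zero_iff hT] at h
    simp [h, F.zero_mem]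
  · have := ((bIdx_eq_succ_iff hT k v).1 h).1
    split_ifs at this with hk
    · exact iff_of_false this (by omega)
    · exact iff_of_true this (by omega)

theorem Arc.bIdx_lt (hT : F.IsEW T) {u v : Fin (n + 1)} (h : F.Arc T u v) :
    F.bIdx (F.phiTC T) u < F.bIdx (F.phiTC T) v := by
  rcases hb : F.bIdx (F.phiTC T) v with _ | k
  · rw [bIdx_eq_zero_iff hT] at hb
    exact absurd (hb ▸ h) (not_arc_zero hT u)
  · exact Nat.lt_succ_of_le (((bIdx_eq_succ_iff hT k v).1 hb).2.2 u h)

theorem exists_bIdx_eq_pred (hT : F.IsEW T) {k : ℕ} {v : Fin (n + 1)}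
    (hv : F.bIdx (F.phiTC T) v = k + 1) : ∃ u, F.bIdx (F.phiTC T) u = k := by
  have hv' := (bIdx_eq_succ_iff hT k v).1 hv
  have hev := mem_rows_iff_even_bIdx hT v
  rcases k with _ | _ | k
  · exact ⟨0, (bIdx_eq_zero_iff hT 0).2 rfl⟩
  · obtain ⟨u, hu⟩ := exists_arc hT (v := v) fun h => by
      rw [(bIdx_eq_zero_iff hT v).2 h] at hv
      omega
    have h₁ := hv'.2.2 u hu
    have h₂ := hu.mem_rows_iff
    rw [hev, mem_rows_iff_even_bIdx hT u] at h₂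
    exact ⟨u, by omega⟩
  · by_contra! hne
    have := (bIdx_eq_succ_iff hT k v).2 ⟨by
      have := hv'.1
      rwa [show (k + 1 + 1) % 2 = k % 2 by omega] at this, by omega, fun u hu => by
      have h₁ := hv'.2.2 u hu
      have h₂ := hu.mem_rows_iff
      have h₃ := hne u
      rw [hev, mem_rows_iff_even_bIdx hT u] at h₂
      omega⟩
    omega

theorem exists_bIdx_eq_of_le (hT : F.IsEW T) {m : ℕ} {v : Fin (n + 1)}
    (hm : m ≤ F.bIdx (F.phiTC T) v) : ∃ u, F.bIdx (F.phiTC T) u = m := by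
  induction hm using Nat.decreasingInduction with
  | self => exact ⟨v, rfl⟩
  | of_succ k _ ih => exact ih.elim fun _ hu => exists_bIdx_eq_pred hT hu

theorem apply_eq_true_iff_bIdx_lt (hT : F.IsEW T) {i j : Fin (n + 1)} (h : F.Cell i j) :
    T i j = true ↔ F.bIdx (F.phiTC T) i < F.bIdx (F.phiTC T) j := by
  cases ht : T i j
  · have := Arc.bIdx_lt hT (Or.inr ⟨h, ht⟩ : F.Arc T j i)
    simp [this.le]
  · simpa using Arc.bIdx_lt hT (Or.inl ⟨h, ht⟩ : F.Arc T i j)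

theorem apply_eq_false_iff_bIdx_lt (hT : F.IsEW T) {i j : Fin (n + 1)} (h : F.Cell i j) :
    T i j = false ↔ F.bIdx (F.phiTC T) j < F.bIdx (F.phiTC T) i := by
  have h₁ := mem_rows_iff_even_bIdx hT i
  have h₂ := mem_rows_iff_even_bIdx hT j
  have h₃ := h.1
  have h₄ := h.2.1
  have : F.bIdx (F.phiTC T) i ≠ F.bIdx (F.phiTC T) j := fun h => by
    rw [h, ← h₂] at h₁
    exact h₄ (h₁.1 h₃)
  rw [← Bool.not_eq_true, apply_eq_true_iff_bIdx_lt hT h]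
  omega

/-- A `0` is cornersupport-free exactly when its column is in the block just before its row. -/
theorem not_cornersupport_iff_of_false (hT : F.IsEW T) {j k : Fin (n + 1)} (h : F.Cell j k)
    (ht : T j k = false) :
    ¬F.Cornersupport T j k ↔ F.bIdx (F.phiTC T) k + 1 = F.bIdx (F.phiTC T) j := by
  have hlt := (apply_eq_false_iff_bIdx_lt hT h).1 ht
  have hj := (mem_rows_iff_even_bIdx hT j).1 h.1
  have hk := (mem_rows_iff_even_bIdx hT k).not.1 h.2.1
  rw [not_iff_comm]
  simp only [Cornersupport, ht, suppS, Bool.not_false, Bool.if_false_right, Bool.and_true,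
    decide_eq_true_eq, decide_eq_false_iff_not, not_lt]
  constructor
  · intro hne
    obtain ⟨a, ha⟩ := exists_bIdx_eq_of_le hT
      (show F.bIdx (F.phiTC T) k + 1 ≤ F.bIdx (F.phiTC T) j by omega)
    obtain ⟨b, hb⟩ := exists_bIdx_eq_of_le hT
      (show F.bIdx (F.phiTC T) k + 2 ≤ F.bIdx (F.phiTC T) j by omega)
    refine ⟨a, b, (mem_rows_iff_even_bIdx hT a).2 (by omega),
      (mem_rows_iff_even_bIdx hT b).not.2 (by omega), ?_, ?_, by omega, by omega, by omega⟩
    · rintro rfl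
      omega
    · rintro rfl
      omega
  · rintro ⟨a, b, ha, hb, -, -, h₁, h₂, h₃⟩
    rw [mem_rows_iff_even_bIdx hT] at ha hb
    omega

/-- A `1` is cornersupport-free exactly when its row is in the block just before its column. -/
theorem not_cornersupport_iff_of_true (hT : F.IsEW T) {j k : Fin (n + 1)} (h : F.Cell j k)
    (ht : T j k = true) :
    ¬F.Cornersupport T j k ↔ F.bIdx (F.phiTC T) j + 1 = F.bIdx (F.phiTC T) k := by
  have hlt := (apply_eq_true_iff_bIdx_lt hT h).1 ht
  have hj := (mem_rows_iff_even_bIdx hT j).1 h.1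
  have hk := (mem_rows_iff_even_bIdx hT k).not.1 h.2.1
  rw [not_iff_comm]
  simp only [Cornersupport, ht, suppS, Bool.not_true, Bool.if_false_right, Bool.and_true,
    decide_eq_true_eq, decide_eq_false_iff_not, not_lt]
  constructor
  · intro hne
    obtain ⟨a, ha⟩ := exists_bIdx_eq_of_le hT
      (show F.bIdx (F.phiTC T) j + 2 ≤ F.bIdx (F.phiTC T) k by omega)
    obtain ⟨b, hb⟩ := exists_bIdx_eq_of_le hT
      (show F.bIdx (F.phiTC T) j + 1 ≤ F.bIdx (F.phiTC T) k by omega)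
    refine ⟨a, b, (mem_rows_iff_even_bIdx hT a).2 (by omega),
      (mem_rows_iff_even_bIdx hT b).not.2 (by omega), ?_, ?_, by omega, by omega, by omega⟩
    · rintro rfl
      omega
    · rintro rfl
      omega
  · rintro ⟨a, b, ha, hb, -, -, h₁, h₂, h₃⟩
    rw [mem_rows_iff_even_bIdx hT] at ha hb
    omega

end

end Ferrers

/-- For every EW-tableau `T` on `F` and every non-sink vertex `j`,
`ν_j(T) = μ_j(φ_TC T)`. -/
theorem nu_eq_mu {n : ℕ} (F : Ferrers n)
    (T : Fin (n + 1) → Fin (n + 1) → Bool) (hT : F.IsEW T) :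
    ∀ j : Fin (n + 1), j ≠ 0 → F.nu T j = F.mu (F.phiTC T) j := by
  intro j hj
  have hpos : F.bIdx (F.phiTC T) j ≠ 0 := (Ferrers.bIdx_eq_zero_iff hT j).not.2 hj
  unfold Ferrers.nu Ferrers.mu
  split_ifs with hrow
  · congr 1
    ext k
    simp only [Set.mem_ofPred_eq, Ferrers.mem_canonTop_iff hT]
    constructor
    · rintro ⟨hc, ht, hs⟩
      rw [Ferrers.not_cornersupport_iff_of_false hT hc ht] at hs
      exact ⟨hc.2.2, by omega⟩
    · rintro ⟨hlt, hb⟩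
      have hk : k ∉ F.rows := by
        rw [Ferrers.mem_rows_iff_even_bIdx hT] at hrow ⊢
        omega
      have hc : F.Cell j k := ⟨hrow, hk, hlt⟩
      have ht := (Ferrers.apply_eq_false_iff_bIdx_lt hT hc).2 (by omega)
      exact ⟨hc, ht, (Ferrers.not_cornersupport_iff_of_false hT hc ht).2 (by omega)⟩
  · congr 1
    ext k
    simp only [Set.mem_ofPred_eq, Ferrers.mem_canonTop_iff hT]
    constructor
    · rintro ⟨hc, ht, hs⟩
      rw [Ferrers.not_cornersupport_iff_of_true hT hc ht] at hs
      exact ⟨hc.2.2, by omega⟩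
    · rintro ⟨hlt, hb⟩
      have hk : k ∈ F.rows := by
        rw [Ferrers.mem_rows_iff_even_bIdx hT] at hrow ⊢
        omega
      have hc : F.Cell k j := ⟨hk, hrow, hlt⟩
      have ht := (Ferrers.apply_eq_true_iff_bIdx_lt hT hc).2 (by omega)
      exact ⟨hc, ht, (Ferrers.not_cornersupport_iff_of_true hT hc ht).2 (by omega)⟩
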